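/- The matrix E − Gᵀ F⁻¹ G is positive semidefinite, provided F is invertible; that is, the generalized Cramér–Rao matrix inequality E ≥ Gᵀ F⁻¹ G holds. -/

import Mathlib

open Matrix

/-!
The moment matrix of the stacked vectors `v_y = (s_y, t y - θ₀)` is a nonnegative combination of the
matrices `v_y v_yᵀ`, hence positive semidefinite. Its blocks are `F`, `G`, `Gᵀ` and `E`, and
`E - Gᵀ F⁻¹ G` is the Schur complement of `F` in it.
-/

section CrossMoment

variable {ι m n m' n' R : Type*} [Fintype ι]

/-- The matrix `∑ i, w i • a i (b i)ᴴ` of second moments between two families of vectors under the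
weights `w`; the second family is conjugated, so that over `ℝ` it is `∑ i, w i • a i (b i)ᵀ`. The
weights need not sum to one and the families are not centred. -/
def crossMoment [NonUnitalNonAssocSemiring R] [Star R]
    (w : ι → R) (a : ι → m → R) (b : ι → n → R) : Matrix m n R :=
  ∑ i, w i • vecMulVec (a i) (star (b i))

theorem crossMoment_sumElim [NonUnitalNonAssocSemiring R] [Star R] (w : ι → R)
    (a : ι → m → R) (b : ι → n → R) (c : ι → m' → R) (d : ι → n' → R) :
    crossMoment w (fun i => Sum.elim (a i) (b i)) (fun i => Sum.elim (c i) (d i)) =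
      fromBlocks (crossMoment w a c) (crossMoment w a d)
        (crossMoment w b c) (crossMoment w b d) := by
  ext (_ | _) (_ | _) <;> simp [crossMoment, Matrix.sum_apply, vecMulVec_apply]

theorem conjTranspose_crossMoment [CommSemiring R] [StarRing R] {w : ι → R}
    (hw : ∀ i, IsSelfAdjoint (w i)) (a : ι → m → R) (b : ι → n → R) :
    (crossMoment w a b)ᴴ = crossMoment w b a := by
  simp [crossMoment, conjTranspose_sum, conjTranspose_smul, conjTranspose_vecMulVec,
    (hw _).star_eq]

theorem posSemidef_crossMoment_self [CommRing R] [PartialOrder R] [StarRing R]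
    [StarOrderedRing R] [Finite n] {w : ι → R} (hw : ∀ i, 0 ≤ w i) (a : ι → n → R) :
    (crossMoment w a a).PosSemidef :=
  posSemidef_sum _ fun i _ => (posSemidef_vecMulVec_self_star (a i)).smul (hw i)

end CrossMoment

open scoped ComplexOrder in
theorem generalized_cramer_rao_matrix_general {ι m n 𝕜 : Type*} [Fintype ι] [Fintype m]
    [DecidableEq m] [Finite n] [RCLike 𝕜] {w : ι → 𝕜} (hw : ∀ i, 0 ≤ w i)
    (a : ι → m → 𝕜) (b : ι → n → 𝕜) (ha : IsUnit (crossMoment w a a)) :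
    (crossMoment w b b - (crossMoment w a b)ᴴ * (crossMoment w a a)⁻¹ *
      crossMoment w a b).PosSemidef := by
  have posDef_a : (crossMoment w a a).PosDef :=
    (posSemidef_crossMoment_self hw a).posDef_iff_isUnit.mpr ha
  have := ha.invertible
  rw [← posDef_a.fromBlocks₁₁, conjTranspose_crossMoment fun i => .of_nonneg (hw i),
    ← crossMoment_sumElim]
  exact posSemidef_crossMoment_self hw _

/-- Generalized Cramér–Rao matrix inequality: `E ≥ Gᵀ F⁻¹ G`. -/
theorem generalized_cramer_rao_matrix
    {k : ℕ} {Y : Type*} [Fintype Y]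
    (θ₀ : Fin k → ℝ) (p : (Fin k → ℝ) → Y → ℝ) (t : Y → Fin k → ℝ)
    (hpos : ∀ y, 0 < p θ₀ y)
    (hsum : ∀ θ, ∑ y, p θ y = 1)
    (hdiff : ∀ y, DifferentiableAt ℝ (fun θ => p θ y) θ₀)
    (s : Y → Fin k → ℝ)
    (hs : ∀ y i, s y i = (p θ₀ y)⁻¹ * fderiv ℝ (fun θ => p θ y) θ₀ (Pi.single i 1))
    (E F G : Matrix (Fin k) (Fin k) ℝ)
    (hE : E = ∑ y, p θ₀ y • vecMulVec (t y - θ₀) (t y - θ₀))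
    (hF : F = ∑ y, p θ₀ y • vecMulVec (s y) (s y))
    (hG : G = ∑ y, p θ₀ y • vecMulVec (s y) (t y - θ₀))
    (hFinv : IsUnit F) :
    (E - Gᵀ * F⁻¹ * G).PosSemidef := by
  subst hE hF hG
  exact generalized_cramer_rao_matrix_general (fun y => (hpos y).le) s (fun y => t y - θ₀) hFinv
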